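/- Consider a scaling of the heterogeneous key predistribution parameters satisfying α_n λ_1(n) = c_n (log n)/n with lim_{n→∞} c_n = c > 0, and suppose additionally that p_11(n) = ω(1/(n α_n)), i.e., n α_n p_11(n) → ∞. Then p_rr(n) = o((log n)²/(n α_n)), i.e., p_rr(n) · n α_n / (log n)² → 0 as n → ∞. -/

import Mathlib

/-!
With `x = ab/P`, the edge probability `p_{ab}` is `min(1, x)` up to a factor `2`: the union bound
gives `p_{ab} ≤ x` (`pEdge_mul_le`), and `1 - p_{ab} ≤ (1 - a/P)^b` gives `p_{ab} ≥ x/(1+x)`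
(`le_pEdge_mul`). Hence `p_{aa} p_{bb} ≤ min(1, a²/P) min(1, b²/P) ≤ min(1, ab/P)² ≤ 4 p_{ab}²`
(`pEdge_mul_pEdge_le`). The scaling bounds the single term `μ_r p_{1r}` of `λ₁`, so
`n αₙ p_{1r} = O(log n)`, and therefore
`n αₙ p_{rr} / (log n)² ≤ 4 (n αₙ p_{1r} / log n)² / (n αₙ p_{11}) = O(1 / (n αₙ p_{11})) → 0`.
-/

open Filter

/-- Probability that a uniformly random `b`-subset of a `P`-set avoids a fixed `a`-subset. -/
noncomputable def avoidProb (P a b : ℕ) : ℝ := ((P - a).choose b : ℝ) / (P.choose b : ℝ)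

/-- `p_{ab}` : probability that independent uniformly random key rings of sizes
`a` and `b` (from a pool of size `P`) intersect. -/
noncomputable def pEdge (P a b : ℕ) : ℝ := 1 - avoidProb P a b

/-- `λ_i` : mean edge probability of a class-`i` node in the inhomogeneous random key graph. -/
noncomputable def lamb {r : ℕ} (μ : Fin (r + 1) → ℝ) (K : Fin (r + 1) → ℕ) (P : ℕ)
    (i : Fin (r + 1)) : ℝ :=
  ∑ j, μ j * pEdge P (K i) (K j)

lemma avoidProb_nonneg (P a b : ℕ) : 0 ≤ avoidProb P a b := by
  unfold avoidProb; positivity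

lemma avoidProb_zero (P a : ℕ) : avoidProb P a 0 = 1 := by simp [avoidProb]

/-- Drawing the `b`-subset one element at a time, the next draw avoids the `a`-subset with
probability `(P - a - b) / (P - b)`. -/
lemma avoidProb_succ (P a b : ℕ) (h : a + (b + 1) ≤ P) :
    avoidProb P a (b + 1) * ((P : ℝ) - b) = avoidProb P a b * ((P : ℝ) - a - b) := by
  have e1 := congrArg (Nat.cast : ℕ → ℝ) (Nat.choose_succ_right_eq P b)
  have e2 := congrArg (Nat.cast : ℕ → ℝ) (Nat.choose_succ_right_eq (P - a) b)
  push_cast [Nat.cast_sub (show b ≤ P by omega)] at e1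
  push_cast [Nat.cast_sub (show b ≤ P - a by omega), Nat.cast_sub (show a ≤ P by omega)] at e2
  have h1 : (0 : ℝ) < (P.choose b : ℝ) := by exact_mod_cast Nat.choose_pos (by omega)
  have h2 : (0 : ℝ) < (P.choose (b + 1) : ℝ) := by exact_mod_cast Nat.choose_pos (by omega)
  have h3 : (0 : ℝ) < (b : ℝ) + 1 := by positivity
  unfold avoidProb
  rw [div_mul_eq_mul_div, div_mul_eq_mul_div, div_eq_div_iff h2.ne' h1.ne']
  apply mul_right_cancel₀ h3.ne'
  linear_combination
    (P.choose b : ℝ) * ((P : ℝ) - b) * e2 - ((P - a).choose b : ℝ) * ((P : ℝ) - a - b) * e1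

/-- The bound `1 - p_{ab} ≤ 1 / (1 + ab/P)`. -/
lemma avoidProb_mul_le (P a b : ℕ) (h : a + b ≤ P) :
    avoidProb P a b * ((P : ℝ) + a * b) ≤ P := by
  induction b with
  | zero => simp [avoidProb_zero]
  | succ b ih =>
    have ih := ih (by omega)
    have hr := avoidProb_succ P a b h
    have hA := avoidProb_nonneg P a b
    have hP : (a : ℝ) + (b + 1) ≤ P := by exact_mod_cast h
    have ha : (0 : ℝ) ≤ a := by positivity
    have hb : (0 : ℝ) ≤ b := by positivity
    have hPb : (0 : ℝ) < (P : ℝ) - b := by linarith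
    have key : ((P : ℝ) - a - b) * (P + a * (b + 1)) ≤ (P - b) * (P + a * b) := by
      nlinarith [mul_nonneg ha hb, mul_nonneg (mul_nonneg ha ha) hb, mul_nonneg ha ha]
    push_cast
    refine le_of_mul_le_mul_right ?_ hPb
    calc avoidProb P a (b + 1) * ((P : ℝ) + a * (b + 1)) * (P - b)
        = avoidProb P a b * (((P : ℝ) - a - b) * (P + a * (b + 1))) := by
          linear_combination ((P : ℝ) + a * (b + 1)) * hr
      _ ≤ avoidProb P a b * (((P : ℝ) - b) * (P + a * b)) := by gcongr
      _ = (avoidProb P a b * ((P : ℝ) + a * b)) * (P - b) := by ring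
      _ ≤ P * (P - b) := by gcongr

/-- The union bound `1 - p_{ab} ≥ 1 - ab/P`. -/
lemma le_avoidProb_mul (P a b : ℕ) (h : a + b ≤ P) :
    (P : ℝ) - a * b ≤ avoidProb P a b * P := by
  induction b with
  | zero => simp [avoidProb_zero]
  | succ b ih =>
    have ih := ih (by omega)
    have hr := avoidProb_succ P a b h
    have hP : (a : ℝ) + (b + 1) ≤ P := by exact_mod_cast h
    have hb : (0 : ℝ) ≤ b := by positivity
    have hPb : (0 : ℝ) < (P : ℝ) - b := by
      have : (0 : ℝ) ≤ a := by positivity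
      linarith
    have haa : (a : ℝ) ≤ a * a := by exact_mod_cast Nat.le_mul_self a
    push_cast
    refine le_of_mul_le_mul_right ?_ hPb
    calc ((P : ℝ) - a * (b + 1)) * (P - b)
        ≤ ((P : ℝ) - a * b) * (P - a - b) := by nlinarith [mul_le_mul_of_nonneg_right haa hb]
      _ ≤ (avoidProb P a b * P) * (P - a - b) :=
          mul_le_mul_of_nonneg_right ih (by linarith)
      _ = avoidProb P a (b + 1) * P * (P - b) := by linear_combination -(P : ℝ) * hr

lemma pEdge_le_one (P a b : ℕ) : pEdge P a b ≤ 1 := by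
  have := avoidProb_nonneg P a b
  unfold pEdge; linarith

lemma pEdge_mul_le (P a b : ℕ) (h : a + b ≤ P) : pEdge P a b * P ≤ a * b := by
  have := le_avoidProb_mul P a b h
  unfold pEdge; linarith

lemma le_pEdge_mul (P a b : ℕ) (h : a + b ≤ P) :
    (a : ℝ) * b ≤ pEdge P a b * (P + a * b) := by
  have := avoidProb_mul_le P a b h
  unfold pEdge; linarith

lemma pEdge_nonneg (P a b : ℕ) (h : a + b ≤ P) (hP : 0 < P) : 0 ≤ pEdge P a b := by
  have h1 := le_pEdge_mul P a b h
  have hP' : (0 : ℝ) < P := by exact_mod_cast hP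
  have h2 : (0 : ℝ) ≤ (a : ℝ) * b := by positivity
  by_contra hneg
  nlinarith [mul_pos (neg_pos.2 (not_le.1 hneg)) (by positivity : (0 : ℝ) < P + a * b)]

/-- The mixed edge probability controls the geometric mean of the two diagonal ones. -/
lemma pEdge_mul_pEdge_le (P a b : ℕ) (ha : 2 * a ≤ P) (hb : 2 * b ≤ P) (hP : 0 < P) :
    pEdge P a a * pEdge P b b ≤ 4 * pEdge P a b ^ 2 := by
  have hP' : (0 : ℝ) < P := by exact_mod_cast hP
  have na := pEdge_nonneg P a a (by omega) hP
  have nb := pEdge_nonneg P b b (by omega) hP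
  have nab := pEdge_nonneg P a b (by omega) hP
  have ua := pEdge_mul_le P a a (by omega)
  have ub := pEdge_mul_le P b b (by omega)
  have l := le_pEdge_mul P a b (by omega)
  have hx : (0 : ℝ) ≤ (a : ℝ) * b := by positivity
  rcases le_total (P : ℝ) (a * b) with hc | hc
  · -- Here `p_{ab} ≥ 1/2`, since `ab/P ≥ 1`.
    have h2 : 1 / 2 ≤ pEdge P a b := by
      by_contra hlt
      nlinarith [mul_le_mul_of_nonneg_left hc nab]
    nlinarith [mul_le_one₀ (pEdge_le_one P a a) nb (pEdge_le_one P b b)]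
  · -- Here `p_{ab} ≥ ab/(2P)`, since `ab/P ≤ 1`.
    have h2 : (a : ℝ) * b ≤ 2 * pEdge P a b * P := by
      nlinarith [mul_le_mul_of_nonneg_left hc nab]
    refine le_of_mul_le_mul_right ?_ (by positivity : (0 : ℝ) < P ^ 2)
    calc pEdge P a a * pEdge P b b * (P : ℝ) ^ 2
        = (pEdge P a a * P) * (pEdge P b b * P) := by ring
      _ ≤ ((a : ℝ) * a) * (b * b) := by gcongr
      _ = ((a : ℝ) * b) ^ 2 := by ring
      _ ≤ (2 * pEdge P a b * P) ^ 2 := by gcongr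
      _ = 4 * pEdge P a b ^ 2 * (P : ℝ) ^ 2 := by ring

/-- under the scaling `αₙ λ₁(n) = cₙ log n / n` with `cₙ → c > 0` and
`p₁₁(n) = ω(1/(n αₙ))`, one has `p_{rr}(n) = o((log n)²/(n αₙ))`. -/
theorem prr_small {r : ℕ} (μ : Fin (r + 1) → ℝ)
    (hμpos : ∀ i, 0 < μ i) (hμsum : ∑ i, μ i = 1)
    (K : ℕ → Fin (r + 1) → ℕ) (P : ℕ → ℕ) (α : ℕ → ℝ)
    (hK1 : ∀ n, 1 ≤ K n 0) (hKmono : ∀ n, Monotone (K n))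
    (hKP : ∀ n, 2 * K n (Fin.last r) ≤ P n)
    (hα : ∀ n, α n ∈ Set.Ioo (0 : ℝ) 1)
    (cseq : ℕ → ℝ) (c : ℝ)
    (hscal : ∀ n, 2 ≤ n → α n * lamb μ (K n) (P n) 0 = cseq n * Real.log n / n)
    (hc : Tendsto cseq atTop (nhds c)) (hcpos : 0 < c)
    (hp11 : Tendsto (fun n : ℕ => (n : ℝ) * α n * pEdge (P n) (K n 0) (K n 0)) atTop atTop) :
    Tendsto
      (fun n : ℕ =>
        pEdge (P n) (K n (Fin.last r)) (K n (Fin.last r)) * ((n : ℝ) * α n) / (Real.log n) ^ 2)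
      atTop (nhds 0) := by
  have hPpos : ∀ n, 0 < P n := fun n => by
    have := hK1 n
    have := hKmono n (Fin.zero_le (Fin.last r))
    have := hKP n
    omega
  have hKle : ∀ n i, 2 * K n i ≤ P n := fun n i => by
    have := hKmono n (Fin.le_last i)
    have := hKP n
    omega
  have hμ := hμpos (Fin.last r)
  have hlim : Tendsto (fun n : ℕ => 4 * (cseq n / μ (Fin.last r)) ^ 2 *
      ((n : ℝ) * α n * pEdge (P n) (K n 0) (K n 0))⁻¹) atTop (nhds 0) := by
    have h := (((hc.div_const (μ (Fin.last r))).pow 2).const_mul 4).mul hp11.inv_tendsto_atTop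
    simpa using h
  refine squeeze_zero' ?_ ?_ hlim
  · filter_upwards with n
    have := pEdge_nonneg (P n) (K n (Fin.last r)) (K n (Fin.last r))
      (by have := hKP n; omega) (hPpos n)
    have := (hα n).1
    positivity
  · filter_upwards [eventually_ge_atTop 2, hp11.eventually_gt_atTop 0] with n hn hpos
    have hn' : (1 : ℝ) < n := by exact_mod_cast hn
    have hL : 0 < Real.log n := Real.log_pos hn'
    have hN : 0 < (n : ℝ) * α n := mul_pos (by linarith) (hα n).1
    have hprod := pEdge_mul_pEdge_le (P n) (K n 0) (K n (Fin.last r)) (hKle n _) (hKle n _)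
      (hPpos n)
    have hnn : ∀ j, 0 ≤ pEdge (P n) (K n 0) (K n j) := fun j =>
      pEdge_nonneg _ _ _ (by have := hKle n 0; have := hKle n j; omega) (hPpos n)
    have hlam : μ (Fin.last r) * pEdge (P n) (K n 0) (K n (Fin.last r)) ≤
        lamb μ (K n) (P n) 0 :=
      Finset.single_le_sum (f := fun j => μ j * pEdge (P n) (K n 0) (K n j))
        (fun j _ => mul_nonneg (hμpos j).le (hnn j)) (Finset.mem_univ _)
    have hs : (n : ℝ) * α n * lamb μ (K n) (P n) 0 = cseq n * Real.log n := by
      rw [mul_assoc, hscal n hn]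
      field_simp
    have hp1r : (n : ℝ) * α n * pEdge (P n) (K n 0) (K n (Fin.last r)) ≤
        cseq n / μ (Fin.last r) * Real.log n := by
      rw [div_mul_eq_mul_div, le_div_iff₀ hμ, ← hs]
      nlinarith [mul_le_mul_of_nonneg_left hlam hN.le]
    have hp1r0 := mul_nonneg hN.le (hnn (Fin.last r))
    rw [← div_eq_mul_inv, div_le_div_iff₀ (by positivity) hpos]
    calc pEdge (P n) (K n (Fin.last r)) (K n (Fin.last r)) * ((n : ℝ) * α n) *
          ((n : ℝ) * α n * pEdge (P n) (K n 0) (K n 0))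
        = ((n : ℝ) * α n) ^ 2 * (pEdge (P n) (K n 0) (K n 0) *
          pEdge (P n) (K n (Fin.last r)) (K n (Fin.last r))) := by ring
      _ ≤ ((n : ℝ) * α n) ^ 2 * (4 * pEdge (P n) (K n 0) (K n (Fin.last r)) ^ 2) := by gcongr
      _ = 4 * ((n : ℝ) * α n * pEdge (P n) (K n 0) (K n (Fin.last r))) ^ 2 := by ring
      _ ≤ 4 * (cseq n / μ (Fin.last r) * Real.log n) ^ 2 := by gcongr
      _ = 4 * (cseq n / μ (Fin.last r)) ^ 2 * Real.log n ^ 2 := by ring
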